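/- (Coboundedness principle, part 1.) Let X be a metric space, let G be a group with a (K,C)-quasi-action (A_g)_{g∈G} on X which is cobounded, let (A_i)_{i∈ι} be a locally finite family of nonempty subsets of X, and suppose G acts on the index set ι compatibly with the quasi-action with some constant C' ≥ 0. Then the action of G on ι has only finitely many orbits. -/

import Mathlib

/-- A `(K,C)`-quasi-isometric embedding between metric spaces. -/
def IsQIEmbedding {X Y : Type*} [MetricSpace X] [MetricSpace Y] (K C : ℝ) (f : X → Y) : Prop :=
  ∀ x x' : X, (1/K) * dist x x' - C ≤ dist (f x) (f x') ∧
    dist (f x) (f x') ≤ K * dist x x' + C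

/-- A `(K,C)`-quasi-isometry between metric spaces. -/
def IsQI {X Y : Type*} [MetricSpace X] [MetricSpace Y] (K C : ℝ) (f : X → Y) : Prop :=
  IsQIEmbedding K C f ∧ ∀ y : Y, ∃ x : X, dist (f x) y ≤ C

/-- A `(K,C)`-quasi-action of a group `G` on a metric space `X`. -/
def IsQuasiAction {G X : Type*} [Group G] [MetricSpace X] (K C : ℝ) (A : G → X → X) : Prop :=
  (∀ g : G, IsQI K C (A g)) ∧ ∀ (g h : G) (x : X), dist (A g (A h x)) (A (g * h) x) ≤ C

/-- A quasi-action is cobounded if some orbit is coarsely dense, uniformly. -/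
def CoboundedQA {G X : Type*} [Group G] [MetricSpace X] (A : G → X → X) : Prop :=
  ∃ r : ℝ, 0 ≤ r ∧ ∀ x y : X, ∃ g : G, dist (A g x) y ≤ r

/-- A family of nonempty subsets of `X` is locally finite if every bounded set meets
only finitely many members of the family. -/
def LocallyFiniteFamily {X ι : Type*} [MetricSpace X] (𝒜 : ι → Set X) : Prop :=
  (∀ i, (𝒜 i).Nonempty) ∧
    ∀ B : Set X, Bornology.IsBounded B → {i : ι | (𝒜 i ∩ B).Nonempty}.Finite

/-- An action of `G` on the index set `ι` is compatible with the quasi-action `A` on `X`,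
with constant `C'`, if `A_g(𝒜 i)` and `𝒜 (g • i)` are at Hausdorff distance at most `C'`. -/
def CompatibleIndexAction {G X ι : Type*} [Group G] [MetricSpace X] [MulAction G ι]
    (A : G → X → X) (𝒜 : ι → Set X) (C' : ℝ) : Prop :=
  ∀ (g : G) (i : ι),
    EMetric.hausdorffEdist ((A g) '' (𝒜 i)) (𝒜 (g • i)) ≤ ENNReal.ofReal C'

/-!
Fix a base point `x₀`. By coboundedness some group element carries a chosen point of `𝒜 i` to
within `r` of `x₀`, and compatibility then moves the corresponding translate `𝒜 (g • i)` to within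
`C' + 1` of that image. So every orbit on `ι` has a representative whose set meets one fixed ball,
and local finiteness leaves only finitely many such representatives.
-/

lemma finite_orbitRel_quotient_of_forall_exists_smul_mem {G α : Type*} [Group G] [MulAction G α]
    {s : Set α} (hs : s.Finite) (h : ∀ a, ∃ g : G, g • a ∈ s) :
    Finite (MulAction.orbitRel.Quotient G α) := by
  have : Finite s := hs
  refine Finite.of_surjective (fun a : s ↦ (⟦a.1⟧ : MulAction.orbitRel.Quotient G α)) ?_
  rintro ⟨a⟩
  obtain ⟨g, hg⟩ := h a
  exact ⟨⟨g • a, hg⟩, Quotient.sound (MulAction.mem_orbit a g)⟩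

namespace CompatibleIndexAction

variable {G X ι : Type*} [Group G] [MetricSpace X] [MulAction G ι]
  {A : G → X → X} {𝒜 : ι → Set X} {C' : ℝ}

lemma exists_dist_lt (hcomp : CompatibleIndexAction A 𝒜 C') (hC' : 0 ≤ C') {R : ℝ} (hR : C' < R)
    (g : G) {i : ι} {x : X} (hx : x ∈ 𝒜 i) :
    ∃ y ∈ 𝒜 (g • i), dist (A g x) y < R := by
  have hlt : Metric.hausdorffEDist (A g '' 𝒜 i) (𝒜 (g • i)) < ENNReal.ofReal R :=
    (hcomp g i).trans_lt ((ENNReal.ofReal_lt_ofReal_iff_of_nonneg hC').2 hR)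
  obtain ⟨y, hy, hxy⟩ :=
    Metric.exists_edist_lt_of_hausdorffEDist_lt (Set.mem_image_of_mem (A g) hx) hlt
  exact ⟨y, hy, edist_lt_ofReal.1 hxy⟩

lemma exists_isBounded_forall_exists_smul_inter_nonempty (hcomp : CompatibleIndexAction A 𝒜 C')
    (hC' : 0 ≤ C') (hcb : CoboundedQA A) (hne : ∀ i, (𝒜 i).Nonempty) :
    ∃ B : Set X, Bornology.IsBounded B ∧ ∀ i, ∃ g : G, (𝒜 (g • i) ∩ B).Nonempty := by
  rcases isEmpty_or_nonempty X with hX | ⟨⟨x₀⟩⟩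
  · exact ⟨∅, Bornology.isBounded_empty, fun i ↦ isEmptyElim (hne i).some⟩
  obtain ⟨r, -, hr⟩ := hcb
  refine ⟨Metric.closedBall x₀ ((C' + 1) + r), Metric.isBounded_closedBall, fun i ↦ ?_⟩
  obtain ⟨x, hx⟩ := hne i
  obtain ⟨g, hg⟩ := hr x x₀
  obtain ⟨y, hy, hxy⟩ := hcomp.exists_dist_lt hC' (lt_add_one C') g hx
  refine ⟨g, y, hy, Metric.mem_closedBall.2 ?_⟩
  calc dist y x₀ ≤ dist (A g x) y + dist (A g x) x₀ := dist_triangle_left y x₀ (A g x)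
    _ ≤ (C' + 1) + r := add_le_add hxy.le hg

end CompatibleIndexAction

theorem coboundedness_principle_finitely_many_orbits_general
    {G X ι : Type*} [Group G] [MetricSpace X] [MulAction G ι]
    {C' : ℝ} (hC' : 0 ≤ C') {A : G → X → X} (hcb : CoboundedQA A)
    {𝒜 : ι → Set X} (hlf : LocallyFiniteFamily 𝒜) (hcomp : CompatibleIndexAction A 𝒜 C') :
    Finite (MulAction.orbitRel.Quotient G ι) := by
  obtain ⟨hne, hfin⟩ := hlf
  obtain ⟨B, hB, hmeet⟩ :=
    hcomp.exists_isBounded_forall_exists_smul_inter_nonempty hC' hcb hne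
  exact finite_orbitRel_quotient_of_forall_exists_smul_mem (hfin B hB) hmeet

/-- **Coboundedness principle, part 1.**  Given a cobounded `(K,C)`-quasi-action of `G`
on `X`, a locally finite family of nonempty subsets of `X` indexed by `ι`, and a compatible
action of `G` on `ι`, the action of `G` on `ι` has only finitely many orbits. -/
theorem coboundedness_principle_finitely_many_orbits
    {G X ι : Type*} [Group G] [MetricSpace X] [MulAction G ι]
    (K C C' : ℝ) (hK : 1 ≤ K) (hC : 0 ≤ C) (hC' : 0 ≤ C')
    (A : G → X → X) (hQA : IsQuasiAction K C A) (hcb : CoboundedQA A)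
    (𝒜 : ι → Set X) (hlf : LocallyFiniteFamily 𝒜)
    (hcomp : CompatibleIndexAction A 𝒜 C') :
    Finite (MulAction.orbitRel.Quotient G ι) := by
  exact coboundedness_principle_finitely_many_orbits_general hC' hcb hlf hcomp
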